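/- Let d ≥ 1, let (Ω, F, P) be a probability space, and let X : ℝ^d × Ω → ℝ be a jointly measurable, stationary random field such that ∫_Ω X(0, ω)² dP(ω) < ∞ (so that by stationarity X(t, ·) ∈ L²(P) for every t). Then the map t ↦ X(t, ·) from ℝ^d to L²(Ω, P) is continuous: for every t₀ ∈ ℝ^d, ∫_Ω (X(t, ω) − X(t₀, ω))² dP(ω) → 0 as t → t₀. -/

import Mathlib

open MeasureTheory Filter

/-!
Almost every path is locally `p`-integrable in `t` by Fubini, so the translates of the path cut off
to a compact neighbourhood of `0` depend continuously on the shift in `Lᵖ(dt)`. Integrating over `ω`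
by dominated convergence and exchanging the integrals, `∫_V ‖X(h + s) - X(s)‖ᵖ ds → 0` as `h → 0`
for a smaller neighbourhood `V` of `0`, the norm being that of `Lᵖ(P)`. By stationarity the
integrand does not depend on `s`, hence it tends to `0` itself.
-/

open scoped NNReal ENNReal Topology

section SquareIntegral

variable {α : Type*} [MeasurableSpace α] {μ : Measure α}

lemma memLp_two_of_lintegral_ofReal_sq_lt_top {f : α → ℝ} (hf : AEStronglyMeasurable f μ)
    (hfin : ∫⁻ x, ENNReal.ofReal (f x ^ 2) ∂μ < ∞) : MemLp f 2 μ :=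
  (memLp_two_iff_integrable_sq hf).2
    ⟨hf.pow 2, (hasFiniteIntegral_iff_ofReal (.of_forall fun _ => sq_nonneg _)).2 hfin⟩

lemma integral_sq_eq_toReal_eLpNorm_two_sq {f : α → ℝ} (hf : AEStronglyMeasurable f μ) :
    ∫ x, f x ^ 2 ∂μ = (eLpNorm f 2 μ).toReal ^ 2 := by
  have hpow : eLpNorm f 2 μ ^ 2 = ∫⁻ x, ‖f x‖ₑ ^ 2 ∂μ := by
    simpa using eLpNorm_nnreal_pow_eq_lintegral (μ := μ) (f := f) (p := 2) two_ne_zero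
  rw [← ENNReal.toReal_pow, hpow,
    integral_eq_lintegral_of_nonneg_ae (.of_forall fun _ => sq_nonneg _) (hf.pow 2)]
  simp_rw [← enorm_pow, Real.enorm_eq_ofReal (sq_nonneg _)]

lemma tendsto_integral_sq_of_tendsto_eLpNorm_two {ι : Type*} {l : Filter ι} {f : ι → α → ℝ}
    (hf : ∀ i, AEStronglyMeasurable (f i) μ)
    (hlim : Tendsto (fun i => eLpNorm (f i) 2 μ) l (𝓝 0)) :
    Tendsto (fun i => ∫ x, f i x ^ 2 ∂μ) l (𝓝 0) := by
  simp_rw [fun i => integral_sq_eq_toReal_eLpNorm_two_sq (hf i)]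
  simpa using ((ENNReal.tendsto_toReal ENNReal.zero_ne_top).comp hlim).pow 2

end SquareIntegral

section Sections

variable {α β E : Type*} [MeasurableSpace α] [MeasurableSpace β] {μ : Measure α} [SFinite μ]
  [NormedAddCommGroup E] [MeasurableSpace E] [OpensMeasurableSpace E] {p : ℝ≥0} {f : α → β → E}

lemma measurable_eLpNorm_rpow_section (hp : p ≠ 0) (hf : Measurable (Function.uncurry f)) :
    Measurable fun b => eLpNorm (fun a => f a b) p μ ^ (p : ℝ) := by
  simp_rw [eLpNorm_nnreal_pow_eq_lintegral hp]
  exact (hf.enorm.pow_const (p : ℝ)).lintegral_prod_left'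

lemma lintegral_eLpNorm_rpow_swap {ν : Measure β} [SFinite ν] (hp : p ≠ 0)
    (hf : Measurable (Function.uncurry f)) :
    ∫⁻ b, eLpNorm (fun a => f a b) p μ ^ (p : ℝ) ∂ν = ∫⁻ a, eLpNorm (f a) p ν ^ (p : ℝ) ∂μ := by
  simp_rw [eLpNorm_nnreal_pow_eq_lintegral hp]
  exact (lintegral_lintegral_swap (hf.enorm.pow_const (p : ℝ)).aemeasurable).symm

end Sections

section Translation

variable {G E : Type*} [MeasurableSpace G] {μ : Measure G} [NormedAddCommGroup E] {p : ℝ≥0∞}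
  {f : G → E}

lemma eLpNorm_translate_sub_le [Add G] [MeasurableAdd G] [μ.IsAddLeftInvariant] (hp : 1 ≤ p)
    (hf : AEStronglyMeasurable f μ) (h : G) :
    eLpNorm (fun s => f (h + s) - f s) p μ ≤ 2 * eLpNorm f p μ := by
  have hh : MeasurePreserving (h + ·) μ μ := measurePreserving_add_left μ h
  calc eLpNorm (fun s => f (h + s) - f s) p μ
      ≤ eLpNorm (f ∘ (h + ·)) p μ + eLpNorm f p μ :=
        eLpNorm_sub_le (hf.comp_measurePreserving hh) hf hp
    _ = 2 * eLpNorm f p μ := by rw [eLpNorm_comp_measurePreserving hf hh, two_mul]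

lemma tendsto_eLpNorm_translate_sub [AddGroup G] [TopologicalSpace G] [IsTopologicalAddGroup G]
    [BorelSpace G] [μ.IsAddLeftInvariant] [μ.InnerRegularCompactLTTop] [IsLocallyFiniteMeasure μ]
    (hp : 1 ≤ p) (hp_top : p ≠ ∞) (hf : MemLp f p μ) :
    Tendsto (fun h => eLpNorm (fun s => f (h + s) - f s) p μ) (𝓝 0) (𝓝 0) := by
  have : Fact (1 ≤ p) := ⟨hp⟩
  let translate : C(G, C(G, G)) := ContinuousMap.curry ⟨fun x : G × G => x.1 + x.2, by fun_prop⟩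
  have hpres (h : G) : MeasurePreserving (translate h) μ μ := measurePreserving_add_left μ h
  have hcont : Continuous fun h =>
      (hf.comp_measurePreserving (hpres h)).toLp (f ∘ translate h) :=
    continuous_const.compMeasurePreservingLp (f := fun _ => hf.toLp f) translate.continuous hpres
      hp_top
  have hlim := (Lp.tendsto_Lp_iff_tendsto_eLpNorm'' _ _ _ _).1 (hcont.tendsto 0)
  simpa [translate, Pi.sub_def] using hlim

end Translation

section RandomField

variable {G Ω E : Type*} [AddGroup G] [TopologicalSpace G] [IsTopologicalAddGroup G]
  [SecondCountableTopology G] [MeasurableSpace G] [BorelSpace G] {μ : Measure G}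
  [μ.IsAddLeftInvariant] [μ.InnerRegularCompactLTTop] [IsLocallyFiniteMeasure μ]
  [MeasurableSpace Ω] {P : Measure Ω} [SFinite P]
  [NormedAddCommGroup E] [SecondCountableTopology E] [MeasurableSpace E] [BorelSpace E]
  {p : ℝ≥0} {X : G → Ω → E}

lemma tendsto_lintegral_eLpNorm_translate_sub (hp : 1 ≤ p)
    (hX : Measurable (Function.uncurry X))
    (hfin : ∫⁻ s, eLpNorm (X s) p P ^ (p : ℝ) ∂μ ≠ ∞) :
    Tendsto (fun h => ∫⁻ s, eLpNorm (X (h + s) - X s) p P ^ (p : ℝ) ∂μ) (𝓝 0) (𝓝 0) := by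
  have hp_pos : 0 < p := one_pos.trans_le hp
  have hp_one : 1 ≤ (p : ℝ≥0∞) := mod_cast hp
  have hpath (ω : Ω) : AEStronglyMeasurable (fun s => X s ω) μ :=
    (hX.comp measurable_prodMk_right).aestronglyMeasurable
  have hdiff (h : G) : Measurable (Function.uncurry fun s => X (h + s) - X s) :=
    (hX.comp ((measurable_fst.const_add h).prodMk measurable_snd)).sub hX
  rw [← lintegral_eLpNorm_rpow_swap hp_pos.ne' hX] at hfin
  simp_rw [← fun h => lintegral_eLpNorm_rpow_swap (ν := P) (μ := μ) hp_pos.ne' (hdiff h)]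
  have hpath_memLp : ∀ᵐ ω ∂P, MemLp (fun s => X s ω) p μ := by
    filter_upwards [ae_lt_top (measurable_eLpNorm_rpow_section hp_pos.ne' hX) hfin] with ω hω
    exact ⟨hpath ω, (ENNReal.rpow_lt_top_iff_of_pos (by positivity)).1 hω⟩
  rw [← lintegral_zero (μ := P)]
  refine tendsto_lintegral_filter_of_dominated_convergence
    (fun ω => (2 * eLpNorm (fun s => X s ω) p μ) ^ (p : ℝ))
    (.of_forall fun h => measurable_eLpNorm_rpow_section hp_pos.ne' (hdiff h))
    (.of_forall fun h => .of_forall fun ω => ?_) ?_ ?_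
  · exact ENNReal.rpow_le_rpow (eLpNorm_translate_sub_le hp_one (hpath ω) h) p.coe_nonneg
  · simp_rw [ENNReal.mul_rpow_of_nonneg _ _ p.coe_nonneg]
    rw [lintegral_const_mul _ (measurable_eLpNorm_rpow_section hp_pos.ne' hX)]
    exact ENNReal.mul_ne_top (by simp) hfin
  · filter_upwards [hpath_memLp] with ω hω
    simpa [hp_pos] using
      (tendsto_eLpNorm_translate_sub hp_one ENNReal.coe_ne_top hω).ennrpow_const (p : ℝ)

lemma tendsto_setLIntegral_eLpNorm_translate_sub {K V : Set G} (hp : 1 ≤ p)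
    (hX : Measurable (Function.uncurry X)) (hK : MeasurableSet K) (hV : MeasurableSet V)
    (hfin : ∫⁻ s in K, eLpNorm (X s) p P ^ (p : ℝ) ∂μ ≠ ∞)
    (hVK : ∀ᶠ h in 𝓝 0, Set.MapsTo (h + ·) V K) :
    Tendsto (fun h => ∫⁻ s in V, eLpNorm (X (h + s) - X s) p P ^ (p : ℝ) ∂μ) (𝓝 0) (𝓝 0) := by
  have hp_pos : 0 < p := one_pos.trans_le hp
  have hsub : V ⊆ K := fun s hs => by simpa using hVK.self_of_nhds hs
  have hloc : Measurable (Function.uncurry (K.indicator X)) := by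
    convert hX.indicator (measurable_fst hK) using 1
    ext x
    by_cases hx : x.1 ∈ K <;> simp [Function.uncurry, hx]
  have hloc_fin : ∫⁻ s, eLpNorm (K.indicator X s) p P ^ (p : ℝ) ∂μ ≠ ∞ := by
    convert hfin using 1
    rw [← lintegral_indicator hK]
    refine lintegral_congr fun s => ?_
    by_cases hs : s ∈ K <;> simp [hs, hp_pos]
  refine tendsto_of_tendsto_of_tendsto_of_le_of_le' tendsto_const_nhds
    (tendsto_lintegral_eLpNorm_translate_sub hp hloc hloc_fin) (.of_forall fun _ => zero_le) ?_
  filter_upwards [hVK] with h hh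
  calc ∫⁻ s in V, eLpNorm (X (h + s) - X s) p P ^ (p : ℝ) ∂μ
      = ∫⁻ s in V, eLpNorm (K.indicator X (h + s) - K.indicator X s) p P ^ (p : ℝ) ∂μ :=
        setLIntegral_congr_fun hV fun s hs => by
          simp only [Set.indicator_of_mem (hh hs), Set.indicator_of_mem (hsub hs)]
    _ ≤ ∫⁻ s, eLpNorm (K.indicator X (h + s) - K.indicator X s) p P ^ (p : ℝ) ∂μ :=
        setLIntegral_le_lintegral V _

end RandomField

/-- Strict stationarity of a random field: the law of the whole family `(X s)`, on the product
σ-algebra, is invariant under the shifts `s ↦ s + t`. -/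
def IsStationaryField {G Ω E : Type*} [Add G] [MeasurableSpace Ω] [MeasurableSpace E]
    (X : G → Ω → E) (P : Measure Ω) : Prop :=
  ∀ t, P.map (fun ω s => X (s + t) ω) = P.map (fun ω s => X s ω)

namespace IsStationaryField

variable {G Ω E : Type*} [MeasurableSpace Ω] {P : Measure Ω} [MeasurableSpace E] {X : G → Ω → E}

lemma identDistrib [Add G] (hstat : IsStationaryField X P) (hX : ∀ t, Measurable (X t)) (t : G) :
    ProbabilityTheory.IdentDistrib (fun ω s => X (s + t) ω) (fun ω s => X s ω) P P where
  aemeasurable_fst := (measurable_pi_lambda _ fun s => hX (s + t)).aemeasurable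
  aemeasurable_snd := (measurable_pi_lambda _ hX).aemeasurable
  map_eq := hstat t

variable [AddZeroClass G] [NormedAddCommGroup E]

lemma eLpNorm_eq [OpensMeasurableSpace E] (hstat : IsStationaryField X P)
    (hX : ∀ t, Measurable (X t)) (p : ℝ≥0∞) (t : G) :
    eLpNorm (X t) p P = eLpNorm (X 0) p P := by
  simpa [Function.comp_def] using
    ((hstat.identDistrib hX t).comp (measurable_pi_apply 0)).eLpNorm_eq p

lemma eLpNorm_sub_eq [BorelSpace E] [SecondCountableTopology E] (hstat : IsStationaryField X P)
    (hX : ∀ t, Measurable (X t)) (p : ℝ≥0∞) (h t : G) :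
    eLpNorm (X (h + t) - X t) p P = eLpNorm (X h - X 0) p P := by
  have hincr : Measurable fun x : G → E => x h - x 0 := by fun_prop
  simpa [Function.comp_def, Pi.sub_def] using
    ((hstat.identDistrib hX t).comp hincr).eLpNorm_eq p

end IsStationaryField

section LpContinuity

variable {G Ω E : Type*} [AddGroup G] [TopologicalSpace G] [IsTopologicalAddGroup G]
  [LocallyCompactSpace G] [SecondCountableTopology G] [MeasurableSpace G] [BorelSpace G]
  [MeasurableSpace Ω] {P : Measure Ω} [SFinite P]
  [NormedAddCommGroup E] [SecondCountableTopology E] [MeasurableSpace E] [BorelSpace E]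
  {X : G → Ω → E}

lemma IsStationaryField.tendsto_eLpNorm_sub_zero {p : ℝ≥0} (hstat : IsStationaryField X P)
    (hp : 1 ≤ p) (hX : Measurable (Function.uncurry X)) (hX₀ : MemLp (X 0) p P) :
    Tendsto (fun h => eLpNorm (X h - X 0) p P) (𝓝 0) (𝓝 0) := by
  have hp_pos : (0 : ℝ) < p := one_pos.trans_le hp
  have hXt (t : G) : Measurable (X t) := hX.comp measurable_prodMk_left
  let μ : Measure G := Measure.addHaar
  obtain ⟨K, hK_nhds, hK_compact, hK_closed⟩ := exists_mem_nhds_isCompact_isClosed (0 : G)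
  obtain ⟨V, hV_open, hV_zero, hVK⟩ := exists_open_nhds_zero_half hK_nhds
  have hV_pos : μ V ≠ 0 := (hV_open.measure_pos μ ⟨0, hV_zero⟩).ne'
  have hV_fin : μ V ≠ ∞ := by
    have hsub : V ⊆ K := fun s hs => by simpa using hVK 0 hV_zero s hs
    exact measure_ne_top_of_subset hsub hK_compact.measure_ne_top
  have hK_fin : ∫⁻ s in K, eLpNorm (X s) p P ^ (p : ℝ) ∂μ ≠ ∞ := by
    simp_rw [hstat.eLpNorm_eq hXt, setLIntegral_const]
    exact ENNReal.mul_ne_top (by simp [hX₀.eLpNorm_ne_top]) hK_compact.measure_ne_top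
  have hmean : Tendsto (fun h => eLpNorm (X h - X 0) p P ^ (p : ℝ) * μ V) (𝓝 0) (𝓝 0) := by
    have hmaps : ∀ᶠ h in 𝓝 0, Set.MapsTo (h + ·) V K :=
      eventually_of_mem (hV_open.mem_nhds hV_zero) hVK
    simpa only [hstat.eLpNorm_sub_eq hXt, setLIntegral_const] using
      tendsto_setLIntegral_eLpNorm_translate_sub hp hX hK_closed.measurableSet
        hV_open.measurableSet hK_fin hmaps
  have hpow : Tendsto (fun h => eLpNorm (X h - X 0) p P ^ (p : ℝ)) (𝓝 0) (𝓝 0) := by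
    simpa [ENNReal.mul_div_cancel_right hV_pos hV_fin] using
      ENNReal.Tendsto.div_const hmean (.inr hV_pos)
  simpa [ENNReal.rpow_rpow_inv hp_pos.ne', hp_pos] using hpow.ennrpow_const (p : ℝ)⁻¹

theorem stationary_measurable_field_L2_continuous_general {p : ℝ≥0∞} (hp : 1 ≤ p) (hp_top : p ≠ ∞)
    (hX : Measurable (Function.uncurry X)) (hstat : IsStationaryField X P)
    (hX₀ : MemLp (X 0) p P) (t₀ : G) :
    Tendsto (fun t => eLpNorm (X t - X t₀) p P) (𝓝 t₀) (𝓝 0) := by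
  lift p to ℝ≥0 using hp_top
  have hshift : Tendsto (fun t => t - t₀) (𝓝 t₀) (𝓝 0) := tendsto_sub_nhds_zero_iff.2 tendsto_id
  have hincr (t : G) : eLpNorm (X t - X t₀) p P = eLpNorm (X (t - t₀) - X 0) p P := by
    simpa using hstat.eLpNorm_sub_eq (fun _ => hX.comp measurable_prodMk_left) p (t - t₀) t₀
  simp_rw [hincr]
  exact (hstat.tendsto_eLpNorm_sub_zero (mod_cast hp) hX hX₀).comp hshift

end LpContinuity

/-- A jointly measurable, stationary random field `X : ℝ^d × Ω → ℝ` with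
`X(0,·) ∈ L²(P)` is `L²`-continuous in the time parameter. -/
theorem stationary_measurable_field_L2_continuous
    (d : ℕ) (hd : 1 ≤ d)
    {Ω : Type*} [MeasurableSpace Ω] (P : Measure Ω) [IsProbabilityMeasure P]
    (X : (Fin d → ℝ) → Ω → ℝ)
    (hXmeas : Measurable (fun p : (Fin d → ℝ) × Ω => X p.1 p.2))
    (hstat : ∀ t : Fin d → ℝ,
      Measure.map (fun ω => (fun s : Fin d → ℝ => X (s + t) ω)) P
        = Measure.map (fun ω => (fun s : Fin d → ℝ => X s ω)) P)
    (hL2 : (∫⁻ ω, ENNReal.ofReal ((X 0 ω) ^ 2) ∂P) < ⊤) :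
    ∀ t₀ : Fin d → ℝ,
      Tendsto (fun t : Fin d → ℝ => ∫ ω, (X t ω - X t₀ ω) ^ 2 ∂P)
        (nhds t₀) (nhds 0) := by
  intro t₀
  have hX (t : Fin d → ℝ) : AEStronglyMeasurable (X t) P :=
    (hXmeas.comp measurable_prodMk_left).aestronglyMeasurable
  exact tendsto_integral_sq_of_tendsto_eLpNorm_two (fun t => (hX t).sub (hX t₀))
    (stationary_measurable_field_L2_continuous_general one_le_two ENNReal.ofNat_ne_top hXmeas hstat
      (memLp_two_of_lintegral_ofReal_sq_lt_top (hX 0) hL2) t₀)
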